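/- arXiv:2510.10042 — 2 statements merged into one kernel-verified Lean document; each statement's English description precedes it below -/
import Mathlib

section
/- Monotone impact of weakening shocks (linear model): suppose M and M+Δ have nonnegative entries, α·‖M‖₂ < 1, α·‖M+Δ‖₂ < 1, Δ has nonpositive entries, and b has nonnegative entries; then the unclipped fixed points x⋆ = (1−α)·(I − α·M)⁻¹·b and x⋆_Δ = (1−α)·(I − α·(M+Δ))⁻¹·b satisfy x⋆_Δ ≤ x⋆ entrywise, i.e., a shock that only decreases influence weights can only decrease the resulting confidence values. -/
/-!
Since `‖α • M‖₂ < 1`, the inverse of `1 - α • M` is the Neumann series `∑ (α • M) ^ k`, and likewise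
for `M + Δ`. The matrices satisfy `0 ≤ α • (M + Δ) ≤ α • M` entrywise, so the same holds for all
their powers (`pow_entry_le_pow_entry`), hence for the two series
(`inv_one_sub_entry_le`). Applying both inverses to the nonnegative vector `b` keeps the inequality.
-/

/-- The spectral (Euclidean) operator norm of a real `n × n` matrix. -/
noncomputable def opNorm2 {n : ℕ} (M : Matrix (Fin n) (Fin n) ℝ) : ℝ :=
  ‖Matrix.toEuclideanCLM (𝕜 := ℝ) M‖

open scoped Matrix.Norms.L2Operator in
/-- Neumann series for the matrix inverse. -/
lemma hasSum_pow_inv_one_sub {n : ℕ} (A : Matrix (Fin n) (Fin n) ℝ) (hA : opNorm2 A < 1) :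
    HasSum (fun k : ℕ => A ^ k) (1 - A)⁻¹ := by
  have hA' : ‖A‖ < 1 := hA
  have hs : Summable (fun k : ℕ => A ^ k) := summable_geometric_of_norm_lt_one hA'
  have h : (1 - A)⁻¹ = ∑' k : ℕ, A ^ k :=
    Matrix.inv_eq_right_inv (mul_neg_geom_series A hA')
  rw [h]
  exact hs.hasSum

lemma pow_entry_le_pow_entry {n : ℕ} {A B : Matrix (Fin n) (Fin n) ℝ}
    (hA : ∀ i j, 0 ≤ A i j) (hAB : ∀ i j, A i j ≤ B i j) (k : ℕ) :
    ∀ i j, 0 ≤ (A ^ k) i j ∧ (A ^ k) i j ≤ (B ^ k) i j := by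
  induction k with
  | zero =>
    intro i j
    simp only [pow_zero, le_refl, and_true, Matrix.one_apply]
    split_ifs <;> norm_num
  | succ k ih =>
    intro i j
    simp only [pow_succ, Matrix.mul_apply]
    refine ⟨Finset.sum_nonneg fun l _ => mul_nonneg (ih i l).1 (hA l j),
      Finset.sum_le_sum fun l _ => ?_⟩
    exact mul_le_mul (ih i l).2 (hAB l j) (hA l j) ((ih i l).1.trans (ih i l).2)

lemma inv_one_sub_entry_le {n : ℕ} {A B : Matrix (Fin n) (Fin n) ℝ}
    (hA : ∀ i j, 0 ≤ A i j) (hAB : ∀ i j, A i j ≤ B i j)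
    (hA1 : opNorm2 A < 1) (hB1 : opNorm2 B < 1) (i j : Fin n) :
    (1 - A)⁻¹ i j ≤ (1 - B)⁻¹ i j := by
  have h (C : Matrix (Fin n) (Fin n) ℝ) (hC : opNorm2 C < 1) :
      HasSum (fun k : ℕ => (C ^ k) i j) ((1 - C)⁻¹ i j) :=
    Pi.hasSum.1 (Pi.hasSum.1 (hasSum_pow_inv_one_sub C hC) i) j
  exact hasSum_le (fun k => (pow_entry_le_pow_entry hA hAB k i j).2) (h A hA1) (h B hB1)

lemma opNorm2_smul {n : ℕ} {α : ℝ} (hα : 0 ≤ α) (A : Matrix (Fin n) (Fin n) ℝ) :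
    opNorm2 (α • A) = α * opNorm2 A := by
  simp only [opNorm2, map_smul, norm_smul, Real.norm_of_nonneg hα]

/-- Monotone impact of weakening shocks (linear model): if `M` and `M+Δ` are entrywise
nonnegative, `α·‖M‖₂ < 1`, `α·‖M+Δ‖₂ < 1`, `Δ ≤ 0` entrywise and `b ≥ 0` entrywise,
then the unclipped fixed points satisfy `x⋆_Δ ≤ x⋆` entrywise. -/
theorem shock_monotone_impact {n : ℕ} (hn : 0 < n)
    (M Δ : Matrix (Fin n) (Fin n) ℝ) (b : Fin n → ℝ) (α : ℝ) (hα : α ∈ Set.Ioo (0 : ℝ) 1)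
    (hM : ∀ i j, 0 ≤ M i j) (hMΔ : ∀ i j, 0 ≤ (M + Δ) i j)
    (hΔ : ∀ i j, Δ i j ≤ 0) (hb : ∀ i, 0 ≤ b i)
    (hcontr : α * opNorm2 M < 1) (hcontrΔ : α * opNorm2 (M + Δ) < 1) :
    ∀ i, ((1 - α) • (1 - α • (M + Δ))⁻¹.mulVec b) i ≤
      ((1 - α) • (1 - α • M)⁻¹.mulVec b) i := by
  intro i
  have hα0 : 0 ≤ α := hα.1.le
  simp only [Pi.smul_apply, smul_eq_mul, Matrix.mulVec, dotProduct]
  refine mul_le_mul_of_nonneg_left (Finset.sum_le_sum fun j _ => ?_) (sub_nonneg.2 hα.2.le)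
  refine mul_le_mul_of_nonneg_right (inv_one_sub_entry_le ?_ ?_ ?_ ?_ i j) (hb j)
  · exact fun k l => mul_nonneg hα0 (hMΔ k l)
  · exact fun k l => mul_le_mul_of_nonneg_left
      (add_le_of_nonpos_right (hΔ k l) : M k l + Δ k l ≤ M k l) hα0
  · rwa [opNorm2_smul hα0]
  · rwa [opNorm2_smul hα0]
end

section
/- Harary's balance criterion: a signed graph on a vertex type V is balanced (i.e., there exists a 2-coloring χ : V → Bool such that E⁺ u v implies χ u = χ v and E⁻ u v implies χ u ≠ χ v for all u, v) if and only if every closed signed walk traverses an even number of negative edges; here a signed walk is a finite sequence of steps, each step going from a vertex u to a vertex v using either a positive edge (E⁺ u v) or a negative edge (E⁻ u v), and a walk is closed if it starts and ends at the same vertex. -/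
/-!
A balanced colouring forces the number of negative edges on a walk to be even exactly when its
endpoints share a colour (`SignedWalk.even_iff_of_coloring`), so closed walks are even.

Conversely, walks can be concatenated and reversed (`SignedWalk.append`, `SignedWalk.reverse`), so
reachability is an equivalence relation. If all closed walks are even, the parity of a walk depends
only on its endpoints (`SignedWalk.even_iff_even`). Choosing a root in each class and colouring a
vertex by the parity of the walks to its root gives a balanced colouring: an edge turns walks from
one endpoint into walks from the other, keeping or flipping the parity according to its sign.
-/

/-- Signed walks in a signed graph `(E⁺, E⁻)`: `SignedWalk Ep En u v k` means there is a
walk from `u` to `v` each of whose steps uses a positive edge (`E⁺`) or a negative edge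
(`E⁻`), traversing exactly `k` negative edges in total. -/
inductive SignedWalk {V : Type*} (Ep En : V → V → Prop) : V → V → ℕ → Prop
  | nil (v : V) : SignedWalk Ep En v v 0
  | pos {u v w : V} {k : ℕ} : Ep u v → SignedWalk Ep En v w k → SignedWalk Ep En u w k
  | neg {u v w : V} {k : ℕ} : En u v → SignedWalk Ep En v w k → SignedWalk Ep En u w (k + 1)

namespace SignedWalk

variable {V : Type*} {Ep En : V → V → Prop}

theorem append {u v w : V} {k l : ℕ} (p : SignedWalk Ep En u v k) (q : SignedWalk Ep En v w l) :
    SignedWalk Ep En u w (k + l) := by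
  induction p with
  | nil _ => simpa using q
  | pos e _ ih => exact pos e (ih q)
  | neg e _ ih => rw [Nat.add_right_comm]; exact neg e (ih q)

theorem reverse (hEp : Symmetric Ep) (hEn : Symmetric En) {u v : V} {k : ℕ}
    (p : SignedWalk Ep En u v k) : SignedWalk Ep En v u k := by
  induction p with
  | nil v => exact nil v
  | pos e _ ih => exact ih.append (pos (hEp e) (nil _))
  | neg e _ ih => exact ih.append (neg (hEn e) (nil _))

theorem even_iff_of_coloring {χ : V → Bool}
    (hχ : ∀ u v : V, (Ep u v → χ u = χ v) ∧ (En u v → χ u ≠ χ v)) {u v : V} {k : ℕ}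
    (p : SignedWalk Ep En u v k) : Even k ↔ χ u = χ v := by
  induction p with
  | nil _ => simp
  | pos e _ ih => rw [ih, (hχ _ _).1 e]
  | @neg u v w k e _ ih =>
    have h := (hχ _ _).2 e
    rw [Nat.even_add_one, ih]
    -- Only two colours are available, so `u`, differing from `v`, matches `w` iff `v` does not.
    cases hu : χ u <;> cases hv : χ v <;> cases hw : χ w <;> simp_all

theorem even_iff_even (hEp : Symmetric Ep) (hEn : Symmetric En)
    (h : ∀ (v : V) (k : ℕ), SignedWalk Ep En v v k → Even k) {u v : V} {k l : ℕ}
    (p : SignedWalk Ep En u v k) (q : SignedWalk Ep En u v l) : Even k ↔ Even l :=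
  Nat.even_add.1 (h _ _ (p.append (q.reverse hEp hEn)))

/-- The equivalence relation of being joined by a signed walk; its classes are the connected
components of the signed graph. -/
def reachableSetoid (hEp : Symmetric Ep) (hEn : Symmetric En) : Setoid V where
  r u v := ∃ k, SignedWalk Ep En u v k
  iseqv :=
    { refl := fun v => ⟨0, nil v⟩
      symm := fun ⟨k, p⟩ => ⟨k, p.reverse hEp hEn⟩
      trans := fun ⟨k, p⟩ ⟨l, q⟩ => ⟨k + l, p.append q⟩ }

/-- Every connected component has a chosen root, reachable from all of its vertices. -/
theorem exists_root (hEp : Symmetric Ep) (hEn : Symmetric En) :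
    ∃ root : V → V, (∀ v, ∃ k, SignedWalk Ep En v (root v) k) ∧
      ∀ u v k, SignedWalk Ep En u v k → root u = root v := by
  let S := reachableSetoid hEp hEn
  refine ⟨fun v => (Quotient.mk S v).out, fun v => ?_, fun u v k p => ?_⟩
  · exact S.symm (Quotient.mk_out (s := S) v)
  · exact congrArg Quotient.out (Quotient.sound (s := S) ⟨k, p⟩)

end SignedWalk

/-- Harary's balance criterion: a signed graph is balanced (admits a 2-coloring with
positive edges monochromatic and negative edges bichromatic) if and only if every closed
signed walk traverses an even number of negative edges. -/
theorem harary_balance_criterion {V : Type*} (Ep En : V → V → Prop)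
    (hEp : Symmetric Ep) (hEn : Symmetric En) :
    (∃ χ : V → Bool, ∀ u v : V, (Ep u v → χ u = χ v) ∧ (En u v → χ u ≠ χ v)) ↔
    (∀ (v : V) (k : ℕ), SignedWalk Ep En v v k → Even k) := by
  classical
  constructor
  · rintro ⟨χ, hχ⟩ v k p
    exact (p.even_iff_of_coloring hχ).2 rfl
  · intro h
    obtain ⟨root, hroot, hconst⟩ := SignedWalk.exists_root hEp hEn
    choose d hd using hroot
    refine ⟨fun v => decide (Even (d v)), fun u v => ⟨fun e => ?_, fun e => ?_⟩⟩
    · have hr : root u = root v := hconst u v _ (.pos e (.nil v))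
      have p : SignedWalk Ep En u (root u) (d v) := hr ▸ .pos e (hd v)
      exact decide_eq_decide.2 (SignedWalk.even_iff_even hEp hEn h (hd u) p)
    · have hr : root u = root v := hconst u v _ (.neg e (.nil v))
      have p : SignedWalk Ep En u (root u) (d v + 1) := hr ▸ .neg e (hd v)
      have hp := SignedWalk.even_iff_even hEp hEn h (hd u) p
      rw [Nat.even_add_one] at hp
      rw [Ne, decide_eq_decide]
      tauto
end
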